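/- arXiv:2109.00856 — 6 statements merged into one kernel-verified Lean document; each statement's English description precedes it below -/
import Mathlib

section
/- Let (A,D) be a regular inclusion of C*-algebras such that n*n ∈ D for every normalizer n ∈ N(A,D). Then every approximate unit for D is also an approximate unit for A. -/
/-!
For a normalizer `n`, the C*-identity gives
`‖n u - n‖² = ‖(u* - 1) n*n (u - 1)‖ ≤ 2 ‖n*n u - n*n‖` for every contraction `u`. Since
`n*n ∈ D`, the right-hand side tends to zero along an approximate unit of `D`. By linearity, density
of the span of the normalizers and the uniform bound `‖u i‖ ≤ 1`, `a u → a` for every `a : A`.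
As the `u i` are self-adjoint, taking adjoints gives `u a → a`.
-/

open scoped ComplexOrder
open Filter Topology

namespace CartanPaper

variable {A : Type*} [NonUnitalCStarAlgebra A]

/-- A state on a C*-algebra: a positive linear functional of norm one. -/
def IsState (ρ : A →L[ℂ] ℂ) : Prop :=
  ‖ρ‖ = 1 ∧ ∀ a : A, 0 ≤ ρ (star a * a)

/-- `n` is a normalizer for the inclusion `(A, D)`:  `n D n* ∪ n* D n ⊆ D`. -/
def IsNormalizer (D : NonUnitalStarSubalgebra ℂ A) (n : A) : Prop :=
  ∀ d ∈ D, n * d * star n ∈ D ∧ star n * d * n ∈ D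

/-- The inclusion `(A, D)` is regular: the linear span of the normalizers is norm-dense in `A`. -/
def IsRegularInclusion (D : NonUnitalStarSubalgebra ℂ A) : Prop :=
  Dense (↑(Submodule.span ℂ {n : A | IsNormalizer D n}) : Set A)

/-- `D` is a maximal abelian *-subalgebra (MASA) of `A`:  the set of elements of `A` commuting
with `D` is exactly `D`.  (This encodes simultaneously that `D` is abelian and that it is
maximal among abelian *-subalgebras.) -/
def IsMasa (D : NonUnitalStarSubalgebra ℂ A) : Prop :=
  {a : A | ∀ d ∈ D, a * d = d * a} = (D : Set A)

end CartanPaper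

open CartanPaper

/-- The C*-identity estimate that reduces convergence of `n u` to convergence of `n*n u`. -/
lemma norm_mul_sub_sq_le {A : Type*} [NonUnitalCStarAlgebra A] (n u : A) (hu : ‖u‖ ≤ 1) :
    ‖n * u - n‖ ^ 2 ≤ 2 * ‖star n * n * u - star n * n‖ := by
  have h : star (n * u - n) * (n * u - n) =
      star u * (star n * n * u - star n * n) - (star n * n * u - star n * n) := by
    simp only [star_sub, star_mul, sub_mul, mul_sub, mul_assoc]
    abel
  rw [sq, ← CStarRing.norm_star_mul_self, h]
  refine (norm_sub_le _ _).trans ?_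
  have h1 := norm_mul_le (star u) (star n * n * u - star n * n)
  rw [norm_star] at h1
  nlinarith [norm_nonneg (star n * n * u - star n * n)]

/-- For a bounded net `u`, the set of `a` with `a * u i → a` is a closed subspace, so it is
everything as soon as it contains a set with dense span. -/
lemma tendsto_mul_of_dense_span {A : Type*} [NonUnitalCStarAlgebra A] {ι : Type*} {l : Filter ι}
    (u : ι → A) (hu : ∀ i, ‖u i‖ ≤ 1) (S : Set A)
    (hS : Dense (↑(Submodule.span ℂ S) : Set A))
    (h : ∀ n ∈ S, Tendsto (fun i => n * u i) l (𝓝 n)) (a : A) :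
    Tendsto (fun i => a * u i) l (𝓝 a) := by
  have hspan : ∀ b ∈ Submodule.span ℂ S, Tendsto (fun i => b * u i) l (𝓝 b) := by
    intro b hb
    induction hb using Submodule.span_induction with
    | mem x hx => exact h x hx
    | zero => simpa using tendsto_const_nhds
    | add x y _ _ hx hy => simpa only [add_mul] using hx.add hy
    | smul c x _ hx => simpa only [smul_mul_assoc] using hx.const_smul c
  rw [Metric.tendsto_nhds]
  intro ε hε
  obtain ⟨b, hb, hab⟩ := Metric.dense_iff.1 hS a (ε / 3) (by positivity)
  filter_upwards [Metric.tendsto_nhds.1 (hspan b hab) (ε / 3) (by positivity)] with i hi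
  rw [Metric.mem_ball] at hb
  have h1 : dist (a * u i) (b * u i) ≤ dist b a := by
    rw [dist_comm b a, dist_eq_norm, dist_eq_norm, ← sub_mul]
    exact (norm_mul_le _ _).trans (mul_le_of_le_one_right (norm_nonneg _) (hu i))
  linarith [dist_triangle4 (a * u i) (b * u i) b a]

/-- If `(A, D)` is a regular inclusion of C*-algebras such that `n* n ∈ D`
for every normalizer `n ∈ N(A, D)`, then every approximate unit for `D` is also an approximate
unit for `A`. -/
theorem stmt_2 {A : Type*} [NonUnitalCStarAlgebra A]
    (D : NonUnitalStarSubalgebra ℂ A) (hDclosed : IsClosed (D : Set A))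
    (hDabelian : ∀ x ∈ D, ∀ y ∈ D, x * y = y * x)
    (hreg : IsRegularInclusion D)
    (hnn : ∀ n : A, IsNormalizer D n → star n * n ∈ D)
    {ι : Type*} [Preorder ι] [IsDirected ι (· ≤ ·)] [Nonempty ι] (u : ι → A)
    (humem : ∀ i, u i ∈ D)
    (hupos : ∀ i, ∃ v ∈ D, u i = star v * v)
    (hunorm : ∀ i, ‖u i‖ ≤ 1)
    (happroxD : ∀ d ∈ D, Tendsto (fun i => u i * d) atTop (𝓝 d) ∧
      Tendsto (fun i => d * u i) atTop (𝓝 d)) :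
    ∀ a : A, Tendsto (fun i => u i * a) atTop (𝓝 a) ∧
      Tendsto (fun i => a * u i) atTop (𝓝 a) := by
  have hright : ∀ a : A, Tendsto (fun i => a * u i) atTop (𝓝 a) := by
    refine tendsto_mul_of_dense_span u hunorm _ hreg fun n hn => ?_
    rw [tendsto_iff_norm_sub_tendsto_zero]
    have h0 := (tendsto_iff_norm_sub_tendsto_zero.1 (happroxD _ (hnn n hn)).2).const_mul 2
    rw [mul_zero] at h0
    have hsq : Tendsto (fun i => ‖n * u i - n‖ ^ 2) atTop (𝓝 0) :=
      squeeze_zero (fun i => sq_nonneg _) (fun i => norm_mul_sub_sq_le n (u i) (hunorm i)) h0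
    simpa using hsq.sqrt
  refine fun a => ⟨?_, hright a⟩
  have hsa : ∀ i, star (u i) = u i := fun i => by
    obtain ⟨v, -, hv⟩ := hupos i
    simp [hv]
  simpa [hsa] using (hright (star a)).star
end

section
/- Let (A,D) be an inclusion of C*-algebras and let n ∈ N(A,D) be a normalizer. If ρ₁ and ρ₂ are states on A whose restrictions to D coincide and give a pure state on D, then ρ₁(n*n) = ρ₂(n*n) and ρ₁(nn*) = ρ₂(nn*). -/
/-!
Let `h` be `n* n` or `n n*`. Then `h ≥ 0` and `h d h ∈ D` for all `d ∈ D`. For a self-adjoint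
`e ∈ D` the compression `x = e h e` is positive, and `x² = e (h e² h) e` belongs to `D`; hence so
does its square root `x` (`compression_mem`). Thus `ρ₁ (e h e) = ρ₂ (e h e)`.

It remains to let `e` vary. Since `ρ₁` has norm one on `D`, there are self-adjoint contractions
`e ∈ D` with `ρ₁ e = ρ₂ e` arbitrarily close to `1` (`exists_almost_unit`), and for any state the
Cauchy–Schwarz inequality gives `|ρ h - ρ (e h e)| ≤ 2 ‖h‖ √(2 (1 - Re ρ e))`
(`IsState.norm_sub_compression_le`). As `A` need not be unital, an approximate unit of `A` plays
the role of `1` in these estimates.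
-/

open scoped ComplexOrder
open Filter Topology

open CartanPaper

namespace CartanPaper

section

variable {A : Type*} [NonUnitalCStarAlgebra A]

lemma IsState.norm_le {ρ : A →L[ℂ] ℂ} (hρ : IsState ρ) (a : A) : ‖ρ a‖ ≤ ‖a‖ := by
  simpa [hρ.1] using ρ.le_opNorm a

lemma IsState.re_le {ρ : A →L[ℂ] ℂ} (hρ : IsState ρ) (a : A) : (ρ a).re ≤ ‖a‖ :=
  (Complex.re_le_norm _).trans (hρ.norm_le a)

lemma IsState.re_star_mul_self_le {ρ : A →L[ℂ] ℂ} (hρ : IsState ρ) (a : A) :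
    (ρ (star a * a)).re ≤ ‖a‖ ^ 2 := by
  simpa [CStarRing.norm_star_mul_self, sq] using hρ.re_le (star a * a)

end

section Ordered

variable {A : Type*} [NonUnitalCStarAlgebra A] [PartialOrder A] [StarOrderedRing A]

/-- A state, regarded as a positive linear map for the order of `A`. -/
noncomputable def IsState.toPositive {ρ : A →L[ℂ] ℂ} (hρ : IsState ρ) : A →ₚ[ℂ] ℂ :=
  PositiveLinearMap.mk₀ ρ.toLinearMap fun x hx => by
    obtain ⟨a, rfl⟩ := CStarAlgebra.nonneg_iff_eq_star_mul_self.mp hx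
    exact hρ.2 a

lemma IsState.map_star {ρ : A →L[ℂ] ℂ} (hρ : IsState ρ) (a : A) : ρ (star a) = star (ρ a) :=
  StarHomClass.map_star hρ.toPositive a

lemma IsState.cauchy_schwarz {ρ : A →L[ℂ] ℂ} (hρ : IsState ρ) (a b : A) :
    ‖ρ (star a * b)‖ ^ 2 ≤ (ρ (star a * a)).re * (ρ (star b * b)).re := by
  have h := norm_inner_le_norm (𝕜 := ℂ) (hρ.toPositive.toPreGNS a) (hρ.toPositive.toPreGNS b)
  have key (c : A) : ‖hρ.toPositive.toPreGNS c‖ ^ 2 = (ρ (star c * c)).re := by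
    have := congrArg Complex.re (hρ.toPositive.preGNS_norm_sq (hρ.toPositive.toPreGNS c))
    rw [← Complex.ofReal_pow, Complex.ofReal_re] at this
    exact this
  rw [← key, ← key, ← mul_pow]
  exact pow_le_pow_left₀ (norm_nonneg _) h 2

lemma IsState.norm_sq_le {ρ : A →L[ℂ] ℂ} (hρ : IsState ρ) (a : A) :
    ‖ρ a‖ ^ 2 ≤ (ρ (star a * a)).re := by
  have hu := CStarAlgebra.increasingApproximateUnit A
  have ht : Tendsto (fun u : A => ‖ρ (u * a)‖ ^ 2) (CStarAlgebra.approximateUnit A)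
      (𝓝 (‖ρ a‖ ^ 2)) :=
    (((ρ.continuous.tendsto a).comp (hu.tendsto_mul_right a)).norm).pow 2
  refine le_of_tendsto ht ?_
  filter_upwards [hu.eventually_norm, hu.eventually_star_eq] with u hu1 hus
  have h1 := hρ.cauchy_schwarz u a
  have h2 : (ρ (star u * u)).re ≤ 1 :=
    (hρ.re_star_mul_self_le u).trans (pow_le_one₀ (norm_nonneg _) hu1)
  rw [hus] at h1 h2
  exact h1.trans (mul_le_of_le_one_left (Complex.nonneg_iff.mp (hρ.2 a)).1 h2)

/-- Cauchy–Schwarz for the factors `1 - e` and `b`, where `1` is approximated by an approximate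
unit of `A`. -/
lemma IsState.norm_sub_mul_sq_le {ρ : A →L[ℂ] ℂ} (hρ : IsState ρ) {e : A}
    (he : star e = e) (he1 : ‖e‖ ≤ 1) (b : A) :
    ‖ρ (b - e * b)‖ ^ 2 ≤ 2 * (1 - (ρ e).re) * ‖b‖ ^ 2 := by
  have hu := CStarAlgebra.increasingApproximateUnit A
  have ht : Tendsto (fun u : A => ‖ρ (u * b - e * b)‖ ^ 2) (CStarAlgebra.approximateUnit A)
      (𝓝 (‖ρ (b - e * b)‖ ^ 2)) :=
    (((ρ.continuous.tendsto _).comp ((hu.tendsto_mul_right b).sub_const (e * b))).norm).pow 2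
  have hl : Tendsto (fun u : A => (ρ (u * e)).re) (CStarAlgebra.approximateUnit A)
      (𝓝 (ρ e).re) :=
    ((Complex.continuous_re.comp ρ.continuous).tendsto e).comp (hu.tendsto_mul_right e)
  have hr : Tendsto (fun u : A => (ρ (e * u)).re) (CStarAlgebra.approximateUnit A)
      (𝓝 (ρ e).re) :=
    ((Complex.continuous_re.comp ρ.continuous).tendsto e).comp (hu.tendsto_mul_left e)
  have hb : Tendsto (fun u : A => (2 - (ρ (u * e)).re - (ρ (e * u)).re) * ‖b‖ ^ 2)
      (CStarAlgebra.approximateUnit A) (𝓝 ((2 - (ρ e).re - (ρ e).re) * ‖b‖ ^ 2)) :=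
    ((hl.const_sub 2).sub hr).mul_const _
  have hgoal : 2 * (1 - (ρ e).re) * ‖b‖ ^ 2 = (2 - (ρ e).re - (ρ e).re) * ‖b‖ ^ 2 := by ring
  rw [hgoal]
  refine le_of_tendsto_of_tendsto ht hb ?_
  filter_upwards [hu.eventually_norm, hu.eventually_star_eq] with u hu1 hus
  have h1 := hρ.cauchy_schwarz (u - e) b
  have h2 : (ρ (u * u)).re ≤ 1 := by
    have := (hρ.re_star_mul_self_le u).trans (pow_le_one₀ (norm_nonneg _) hu1)
    rwa [hus] at this
  have h3 : (ρ (e * e)).re ≤ 1 := by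
    have := (hρ.re_star_mul_self_le e).trans (pow_le_one₀ (norm_nonneg _) he1)
    rwa [he] at this
  have h4 : (ρ (star (u - e) * (u - e))).re ≤ 2 - (ρ (u * e)).re - (ρ (e * u)).re := by
    rw [star_sub, hus, he, mul_sub, sub_mul, sub_mul]
    simp only [map_sub, Complex.sub_re]
    linarith
  have h0 : 0 ≤ (ρ (star (u - e) * (u - e))).re := (Complex.nonneg_iff.mp (hρ.2 _)).1
  rw [star_sub, hus, he, sub_mul] at h1
  refine h1.trans ?_
  rw [star_sub, hus, he] at h4 h0
  exact mul_le_mul h4 (hρ.re_star_mul_self_le b) (Complex.nonneg_iff.mp (hρ.2 b)).1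
    (h0.trans h4)

lemma IsState.norm_sub_compression_le {ρ : A →L[ℂ] ℂ} (hρ : IsState ρ) {e : A}
    (he : star e = e) (he1 : ‖e‖ ≤ 1) {h : A} (hh : star h = h) :
    ‖ρ h - ρ (e * h * e)‖ ≤ 2 * (√(2 * (1 - (ρ e).re)) * ‖h‖) := by
  have hpos : 0 ≤ 2 * (1 - (ρ e).re) := by linarith [hρ.re_le e]
  have key (b : A) (hb : ‖b‖ ≤ ‖h‖) :
      ‖ρ (b - e * b)‖ ≤ √(2 * (1 - (ρ e).re)) * ‖h‖ := by
    refine le_of_sq_le_sq ?_ (by positivity)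
    rw [mul_pow, Real.sq_sqrt hpos]
    exact (hρ.norm_sub_mul_sq_le he he1 b).trans (by gcongr)
  have h1 := key h le_rfl
  have h2 := key (h * e) ((norm_mul_le h e).trans (mul_le_of_le_one_right (norm_nonneg _) he1))
  -- Taking adjoints turns `h e - e h e` into `e h - e h e`.
  have h3 : ρ (h * e - e * (h * e)) = star (ρ (e * h - e * h * e)) := by
    rw [← hρ.map_star]
    simp [he, hh, mul_assoc]
  rw [h3, norm_star] at h2
  calc ‖ρ h - ρ (e * h * e)‖ = ‖ρ (h - e * h) + ρ (e * h - e * h * e)‖ := by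
        simp only [map_sub]
        congr 1
        ring
    _ ≤ _ := (norm_add_le _ _).trans (by linarith)

/-- The positive element `e h e` is the square root of `e (h e² h) e ∈ D`. -/
lemma compression_mem (D : NonUnitalStarSubalgebra ℂ A) (hD : IsClosed (D : Set A)) {h : A}
    (hh : 0 ≤ h) (hmem : ∀ d ∈ D, h * d * h ∈ D) {e : A} (he : star e = e) (heD : e ∈ D) :
    e * h * e ∈ D := by
  have hx : 0 ≤ e * h * e := by
    have := star_left_conjugate_nonneg hh e
    rwa [he] at this
  have hsq : (e * h * e) * (e * h * e) ∈ D := by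
    have := mul_mem (mul_mem heD (hmem _ (mul_mem heD heD))) heD
    simpa only [mul_assoc] using this
  have hpos : 0 ≤ (e * h * e) * (e * h * e) := by
    have := star_mul_self_nonneg (e * h * e)
    rwa [(IsSelfAdjoint.of_nonneg hx).star_eq] at this
  rw [← CFC.sqrt_mul_self (e * h * e) hx, CFC.sqrt_eq_real_sqrt _ hpos]
  exact cfcₙ_mem (𝕜' := ℂ) (hs := hD) _ hsq

lemma exists_almost_unit (D : NonUnitalStarSubalgebra ℂ A) {ρ : A →L[ℂ] ℂ} (hρ : IsState ρ)
    (σ : D →L[ℂ] ℂ) (hσ : ‖σ‖ = 1) (hσρ : ∀ x : D, σ x = ρ x) {δ : ℝ} (hδ : 0 < δ) :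
    ∃ e ∈ D, star e = e ∧ ‖e‖ ≤ 1 ∧ 1 - δ ≤ (ρ e).re := by
  obtain ⟨x, hx1, hx⟩ := σ.exists_lt_apply_of_lt_opNorm (r := 1 - δ / 2) (by linarith)
  have hx1' : ‖(x : A)‖ ≤ 1 := hx1.le
  refine ⟨star (x : A) * x, mul_mem (star_mem x.2) x.2, by simp, ?_, ?_⟩
  · rw [CStarRing.norm_star_mul_self]
    exact mul_le_one₀ hx1' (norm_nonneg _) hx1'
  · rw [hσρ] at hx
    nlinarith [hρ.norm_sq_le (x : A), sq_nonneg (‖ρ (x : A)‖ - 1)]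

lemma states_agree (D : NonUnitalStarSubalgebra ℂ A) (hD : IsClosed (D : Set A))
    {ρ₁ ρ₂ : A →L[ℂ] ℂ} (hρ₁ : IsState ρ₁) (hρ₂ : IsState ρ₂)
    (hagree : ∀ x : D, ρ₁ x = ρ₂ x) (σ : D →L[ℂ] ℂ) (hσ : ‖σ‖ = 1)
    (hσρ : ∀ x : D, σ x = ρ₁ x) {h : A} (hh : 0 ≤ h) (hmem : ∀ d ∈ D, h * d * h ∈ D) :
    ρ₁ h = ρ₂ h := by
  have hhs : star h = h := (IsSelfAdjoint.of_nonneg hh).star_eq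
  have bound (δ : ℝ) (hδ : 0 < δ) : ‖ρ₁ h - ρ₂ h‖ ≤ 4 * (√(2 * δ) * ‖h‖) := by
    obtain ⟨e, heD, he, he1, heρ⟩ := exists_almost_unit D hρ₁ σ hσ hσρ hδ
    have hxD := compression_mem D hD hh hmem he heD
    have hx : ρ₁ (e * h * e) = ρ₂ (e * h * e) := hagree ⟨_, hxD⟩
    have hee : ρ₁ e = ρ₂ e := hagree ⟨e, heD⟩
    have h1 := hρ₁.norm_sub_compression_le he he1 hhs
    have h2 := hρ₂.norm_sub_compression_le he he1 hhs
    rw [← hx, ← hee, norm_sub_rev] at h2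
    have h3 : √(2 * (1 - (ρ₁ e).re)) * ‖h‖ ≤ √(2 * δ) * ‖h‖ := by
      gcongr
      linarith
    have h4 := norm_sub_le_norm_sub_add_norm_sub (ρ₁ h) (ρ₁ (e * h * e)) (ρ₂ h)
    linarith
  have hlim : Tendsto (fun δ : ℝ => 4 * (√(2 * δ) * ‖h‖)) (𝓝[>] 0) (𝓝 0) := by
    have hc : Continuous fun δ : ℝ => 4 * (√(2 * δ) * ‖h‖) := by fun_prop
    simpa using (hc.tendsto 0).mono_left nhdsWithin_le_nhds
  have h0 : ‖ρ₁ h - ρ₂ h‖ ≤ 0 :=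
    ge_of_tendsto hlim (by filter_upwards [self_mem_nhdsWithin] with δ hδ using bound δ hδ)
  exact sub_eq_zero.mp (norm_le_zero_iff.mp h0)

end Ordered

end CartanPaper

/-- Let `(A, D)` be an inclusion of C*-algebras and let `n ∈ N(A, D)`.
If `ρ₁` and `ρ₂` are states on `A` whose restrictions to `D` coincide and give a pure state on
`D` (an extreme point of the state space of `D`), then `ρ₁ (n* n) = ρ₂ (n* n)` and
`ρ₁ (n n*) = ρ₂ (n n*)`. -/
theorem stmt_4 {A : Type*} [NonUnitalCStarAlgebra A]
    (D : NonUnitalStarSubalgebra ℂ A) [IsClosed (D : Set A)]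
    (hDabelian : ∀ x ∈ D, ∀ y ∈ D, x * y = y * x)
    (n : A) (hn : IsNormalizer D n)
    (ρ₁ ρ₂ : A →L[ℂ] ℂ) (hρ₁ : IsState ρ₁) (hρ₂ : IsState ρ₂)
    (hagree : ∀ x : D, ρ₁ x = ρ₂ x)
    (hpure : ∃ σ : D →L[ℂ] ℂ, (∀ x : D, σ x = ρ₁ x) ∧
      σ ∈ Set.extremePoints ℝ {φ : D →L[ℂ] ℂ | IsState φ}) :
    ρ₁ (star n * n) = ρ₂ (star n * n) ∧ ρ₁ (n * star n) = ρ₂ (n * star n) := by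
  let _ : PartialOrder A := CStarAlgebra.spectralOrder A
  have _ : StarOrderedRing A := CStarAlgebra.spectralOrderedRing A
  obtain ⟨σ, hσρ, hσ, -⟩ := hpure
  constructor
  · refine states_agree D ‹_› hρ₁ hρ₂ hagree σ hσ.1 hσρ (star_mul_self_nonneg n) fun d hd => ?_
    have := (hn _ (hn d hd).1).2
    simpa only [mul_assoc] using this
  · refine states_agree D ‹_› hρ₁ hρ₂ hagree σ hσ.1 hσρ (mul_star_self_nonneg n) fun d hd => ?_
    have := (hn _ (hn d hd).2).1
    simpa only [mul_assoc] using this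
end

section
/- Let (A,D) be an inclusion of C*-algebras and let n ∈ N(A,D) be a normalizer. Then the norm closures of nn*D and of n*nD are (closed two-sided) ideals of D, and the map nn*d ↦ n*dn (d ∈ D) extends uniquely to a *-isomorphism θ_n from the closure of nn*D onto the closure of n*nD satisfying n θ_n(h) = h n for every h in the closure of nn*D. -/
/-!
Write `p = n⋆n`, `q = nn⋆`, `I = closure (q D)`, `J = closure (p D)`.

The elements `p` and `q` commute with `D` and multiply `D` into itself
(`star_mul_self_mem_commMult`), even though `D` need not contain an approximate unit for `A`. This
makes `I` and `J` closed ideals of `D` (`exists_rangeAlg`). A closed ideal contains every `y ∈ D`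
with `y⋆y` in it, which puts `n⋆ d n` in `J` and `n d n⋆` in `I` (`conj_mem_rangeIdeal`). Both facts
rest on `exists_approx`.

The isomorphism `θ_n` is obtained from its graph `thetaGraph I J n`, the set of pairs
`(h, k) ∈ I × J` with `n k = h n` and `n⋆ h = k n⋆`. It is a closed star subalgebra of `A × A`, i.e.
a C⋆-algebra. Its two coordinate projections are injective, because `n k = 0` with `k ∈ J` forces
`k = 0` (`eq_zero_of_mul_eq_zero`), and likewise for `n⋆` and `I`. Injective star homomorphisms of
C⋆-algebras are isometric with closed range. The graph contains `(q d, n⋆ d n)` and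
`(n d n⋆, p d)` for `d ∈ D`, so the projections are onto `I` and `J`. Hence the graph is that of an
isometric star isomorphism. Uniqueness follows from `n θ(h) = h n` alone, by injectivity of `n` on
`J`.
-/

open scoped ComplexOrder
open Filter Topology

open CartanPaper

namespace CartanPaper

variable {A : Type*} [NonUnitalCStarAlgebra A]

/-- The norm closure of `n n* D` (for `n` a normalizer of `D`). Note that
`rangeIdeal (star n) D` is then the norm closure of `n* n D`. -/
def rangeIdeal (n : A) (D : NonUnitalStarSubalgebra ℂ A) : Set A :=
  closure {x : A | ∃ d ∈ D, x = n * star n * d}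

/-- The characterizing properties of the partial automorphism `θ_n` associated to a normalizer
`n`:  `θ` maps the closure of `n n* D` bijectively and continuously onto the closure of
`n* n D`; it is additive, `ℂ`-homogeneous, multiplicative and star-preserving there; it extends
the map `n n* d ↦ n* d n`; and `n * θ h = h * n` for every `h` in the closure of `n n* D`. -/
def ThetaProps (D : NonUnitalStarSubalgebra ℂ A) (n : A) (θ : A → A) : Prop :=
  Set.BijOn θ (rangeIdeal n D) (rangeIdeal (star n) D) ∧
  ContinuousOn θ (rangeIdeal n D) ∧
  (∀ x ∈ rangeIdeal n D, ∀ y ∈ rangeIdeal n D, θ (x + y) = θ x + θ y) ∧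
  (∀ c : ℂ, ∀ x ∈ rangeIdeal n D, θ (c • x) = c • θ x) ∧
  (∀ x ∈ rangeIdeal n D, ∀ y ∈ rangeIdeal n D, θ (x * y) = θ x * θ y) ∧
  (∀ x ∈ rangeIdeal n D, θ (star x) = star (θ x)) ∧
  (∀ d ∈ D, θ (n * star n * d) = star n * d * n) ∧
  (∀ h ∈ rangeIdeal n D, n * θ h = h * n)

end CartanPaper

namespace CartanPaper

variable {A : Type*} [NonUnitalCStarAlgebra A]

/-- An approximate unit of a closed star subalgebra `B` of `A` is a right approximate unit for
every `y : A` with `y⋆y ∈ B`, not only for `y ∈ B`: writing `w = y⋆y`, the C⋆-identity gives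
`‖y - y u‖² = ‖(w - w u) - u (w - w u)‖ ≤ 2 ‖w - w u‖`. -/
lemma exists_approx (B : NonUnitalStarSubalgebra ℂ A) (hB : IsClosed (B : Set A)) :
    ∃ l : Filter A, l.NeBot ∧ (∀ᶠ u in l, u ∈ B ∧ star u = u) ∧
      ∀ y : A, star y * y ∈ B → Tendsto (fun u => y * u) l (𝓝 y) := by
  have : IsClosed (B : Set A) := hB
  let : PartialOrder B := CStarAlgebra.spectralOrder B
  have : StarOrderedRing B := CStarAlgebra.spectralOrderedRing B
  have hl := CStarAlgebra.increasingApproximateUnit B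
  have := hl.neBot
  refine ⟨map Subtype.val (CStarAlgebra.approximateUnit B), inferInstance, ?_, ?_⟩
  · rw [eventually_map]
    filter_upwards [hl.eventually_star_eq] with u hu
    exact ⟨u.2, congrArg Subtype.val hu⟩
  · intro y hy
    rw [tendsto_map'_iff]
    have h1 : Tendsto (fun u : B => 2 * ‖star y * y - star y * y * (u : A)‖)
        (CStarAlgebra.approximateUnit B) (𝓝 0) := by
      have h2 := (continuous_subtype_val.tendsto _).comp (hl.tendsto_mul_left ⟨_, hy⟩)
      have h3 := ((tendsto_const_nhds (x := star y * y)).sub h2).norm.const_mul 2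
      simpa using h3
    have h4 := h1.sqrt
    rw [Real.sqrt_zero] at h4
    rw [tendsto_iff_norm_sub_tendsto_zero]
    refine squeeze_zero' (Eventually.of_forall fun u => norm_nonneg _) ?_ h4
    filter_upwards [hl.eventually_star_eq, hl.eventually_norm] with u hu hu1
    have hu' : star (u : A) = u := congrArg Subtype.val hu
    have hu1' : ‖(u : A)‖ ≤ 1 := hu1
    apply Real.le_sqrt_of_sq_le
    rw [sq, ← CStarRing.norm_star_mul_self]
    simp only [Function.comp]
    have : star (y * (u : A) - y) * (y * u - y)
        = (star y * y - star y * y * u) - u * (star y * y - star y * y * u) := by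
      simp only [star_sub, star_mul, hu']
      noncomm_ring
    rw [this]
    refine (norm_sub_le _ _).trans ?_
    have := norm_mul_le (u : A) (star y * y - star y * y * u)
    nlinarith [norm_nonneg (star y * y - star y * y * (u : A))]

/-- The elements of `A` that commute with `D` and multiply `D` into itself. -/
def commMult (D : NonUnitalStarSubalgebra ℂ A) : NonUnitalStarSubalgebra ℂ A where
  carrier := {a | ∀ d ∈ D, a * d ∈ D ∧ a * d = d * a}
  add_mem' {a b} ha hb d hd := by
    rw [add_mul, mul_add, (ha d hd).2, (hb d hd).2]
    refine ⟨?_, rfl⟩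
    rw [← (ha d hd).2, ← (hb d hd).2]
    exact add_mem (ha d hd).1 (hb d hd).1
  zero_mem' d hd := by simp
  mul_mem' {a b} ha hb d hd := by
    rw [mul_assoc]
    refine ⟨(ha _ (hb d hd).1).1, ?_⟩
    rw [(hb d hd).2, ← mul_assoc, (ha d hd).2, mul_assoc]
  smul_mem' c a ha d hd := by
    rw [smul_mul_assoc, mul_smul_comm, (ha d hd).2]
    refine ⟨?_, rfl⟩
    rw [← (ha d hd).2]
    exact SMulMemClass.smul_mem c (ha d hd).1
  star_mem' {a} ha d hd := by
    have h := ha (star d) (star_mem hd)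
    have h1 : star a * d = d * star a := by
      simpa using (congrArg star h.2).symm
    refine ⟨?_, h1⟩
    rw [h1]
    simpa using star_mem h.1

lemma isClosed_commMult (D : NonUnitalStarSubalgebra ℂ A) (hD : IsClosed (D : Set A)) :
    IsClosed (commMult D : Set A) := by
  have : (commMult D : Set A) = ⋂ d ∈ D, {a | a * d ∈ (D : Set A)} ∩ {a | a * d = d * a} := by
    ext a
    simp only [Set.mem_iInter]
    rfl
  rw [this]
  refine isClosed_biInter fun d _ => IsClosed.inter ?_ ?_
  · exact hD.preimage (continuous_id.mul continuous_const)
  · exact isClosed_eq (continuous_id.mul continuous_const) (continuous_const.mul continuous_id)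

lemma isNormalizer_star {D : NonUnitalStarSubalgebra ℂ A} {n : A} (hn : IsNormalizer D n) :
    IsNormalizer D (star n) := fun d hd => by
  rw [star_star]
  exact ⟨(hn d hd).2, (hn d hd).1⟩

/-- If `n` normalizes `D`, then `n⋆n` commutes with `D` and `n⋆n D ⊆ D`. With `p = n⋆n` one has
`p D p ⊆ D`, and `p * p` times `d` is the limit of `(p u p) d ∈ D` along an approximate unit `u` of
`D`. So `p * p` lies in `commMult D`, hence so does its square root `p`. -/
lemma star_mul_self_mem_commMult (D : NonUnitalStarSubalgebra ℂ A)
    (hD : IsClosed (D : Set A)) (hab : ∀ x ∈ D, ∀ y ∈ D, x * y = y * x)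
    {n : A} (hn : IsNormalizer D n) : star n * n ∈ commMult D := by
  set p := star n * n with hp
  have hps : star p = p := by simp [hp]
  have hpp : ∀ d ∈ D, p * d * p ∈ D := fun d hd => by
    have := (hn _ (hn d hd).1).2
    simpa only [hp, mul_assoc] using this
  obtain ⟨l, hl, hlB, hlt⟩ := exists_approx D hD
  -- `exists_approx` applies to `d p`, because `(d p)⋆ (d p) = p (d⋆ d) p ∈ D`.
  have key : ∀ d ∈ D, Tendsto (fun u => d * (p * u * p)) l (𝓝 (d * (p * p))) := fun d hd => by
    have h := hlt (d * p) (by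
      simpa [hps, mul_assoc] using hpp _ (mul_mem (star_mem hd) hd))
    simpa only [mul_assoc] using h.mul_const p
  -- The same net also tends to `p² d`: take adjoints and commute `p u p ∈ D` with `d`.
  have key' : ∀ d ∈ D, Tendsto (fun u => d * (p * u * p)) l (𝓝 (p * p * d)) := fun d hd => by
    have h := (key (star d) (star_mem hd)).star
    simp only [star_mul, star_star, hps] at h
    refine h.congr' ?_
    filter_upwards [hlB] with u hu
    rw [hu.2, ← mul_assoc p u p]
    exact hab _ (hpp u hu.1) d hd
  have hp2 : p * p ∈ commMult D := fun d hd => by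
    refine ⟨?_, tendsto_nhds_unique (key' d hd) (key d hd)⟩
    refine hD.mem_of_tendsto (key' d hd) ?_
    filter_upwards [hlB] with u hu
    exact mul_mem hd (hpp u hu.1)
  let _ : PartialOrder A := CStarAlgebra.spectralOrder A
  have _ : StarOrderedRing A := CStarAlgebra.spectralOrderedRing A
  have hp0 : 0 ≤ p := star_mul_self_nonneg n
  have hpp0 : 0 ≤ p * p := by simpa [hps] using star_mul_self_nonneg p
  have := isClosed_commMult D hD
  rw [← CFC.sqrt_mul_self p hp0, CFC.sqrt, cfcₙ_nnreal_eq_real _ _ hpp0]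
  exact cfcₙ_mem (𝕜' := ℂ) _ hp2

/-- For a normalizer `n`, the closure of `n n⋆ D` is a star subalgebra of `D` and an ideal
of `D`. -/
lemma exists_rangeAlg (D : NonUnitalStarSubalgebra ℂ A)
    (hD : IsClosed (D : Set A)) (hab : ∀ x ∈ D, ∀ y ∈ D, x * y = y * x)
    {n : A} (hn : IsNormalizer D n) :
    ∃ I : NonUnitalStarSubalgebra ℂ A, (I : Set A) = rangeIdeal n D ∧ I ≤ D ∧
      ∀ d ∈ D, ∀ x ∈ I, d * x ∈ I ∧ x * d ∈ I := by
  have hq : n * star n ∈ commMult D := by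
    simpa using star_mul_self_mem_commMult D hD hab (isNormalizer_star hn)
  set q := n * star n with hqdef
  have hqs : star q = q := by simp [hqdef]
  let I₀ : NonUnitalStarSubalgebra ℂ A :=
    { carrier := {x : A | ∃ d ∈ D, x = q * d}
      add_mem' := by
        rintro _ _ ⟨d, hd, rfl⟩ ⟨e, he, rfl⟩
        exact ⟨d + e, add_mem hd he, (mul_add _ _ _).symm⟩
      zero_mem' := ⟨0, zero_mem _, by simp⟩
      mul_mem' := by
        rintro _ _ ⟨d, hd, rfl⟩ ⟨e, he, rfl⟩
        exact ⟨d * (q * e), mul_mem hd (hq e he).1, mul_assoc _ _ _⟩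
      smul_mem' := by
        rintro c _ ⟨d, hd, rfl⟩
        exact ⟨c • d, SMulMemClass.smul_mem c hd, (mul_smul_comm _ _ _).symm⟩
      star_mem' := by
        rintro _ ⟨d, hd, rfl⟩
        exact ⟨star d, star_mem hd, by rw [star_mul, hqs, (hq _ (star_mem hd)).2]⟩ }
  have hI : (I₀.topologicalClosure : Set A) = rangeIdeal n D := rfl
  have hsub : I₀.topologicalClosure ≤ D := by
    refine NonUnitalStarSubalgebra.topologicalClosure_minimal _ ?_ hD
    rintro _ ⟨d, hd, rfl⟩
    exact (hq d hd).1
  have hleft : ∀ d ∈ D, ∀ x ∈ I₀.topologicalClosure, d * x ∈ I₀.topologicalClosure := by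
    intro d hd x hx
    refine map_mem_closure (f := fun x => d * x) (continuous_const.mul continuous_id) hx ?_
    rintro _ ⟨e, he, rfl⟩
    refine ⟨d * e, mul_mem hd he, ?_⟩
    change d * (q * e) = _
    rw [← mul_assoc, ← (hq d hd).2, mul_assoc]
  refine ⟨I₀.topologicalClosure, hI, hsub, fun d hd x hx => ⟨hleft d hd x hx, ?_⟩⟩
  rw [hab x (hsub hx) d hd]
  exact hleft d hd x hx

/-- Left multiplication by `n` is injective on the closure `J` of `n⋆n D`: if `k ∈ J` and `n k = 0`,
then `k` is annihilated by `(n⋆n d)⋆ = d⋆ n⋆ n` for all `d ∈ D`, hence by `k⋆`. -/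
lemma eq_zero_of_mul_eq_zero (D : NonUnitalStarSubalgebra ℂ A) {n k : A}
    (hk : k ∈ rangeIdeal (star n) D) (h : n * k = 0) : k = 0 := by
  have hcl : IsClosed {x : A | star x * k = 0} :=
    isClosed_eq (continuous_star.mul continuous_const) continuous_const
  have : k ∈ {x : A | star x * k = 0} := by
    refine closure_minimal ?_ hcl hk
    rintro _ ⟨d, -, rfl⟩
    simp [mul_assoc, h]
  exact CStarRing.star_mul_self_eq_zero_iff k |>.1 this

/-- The values `y = n⋆ d n` of `θ_n` lie in the closure `J` of `n⋆n D`: since `n n⋆` commutes with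
`D`, `y⋆y = n⋆n (n⋆ d⋆ d n) ∈ J`, and an element `y` of `D` with `y⋆y` in a closed ideal lies in that
ideal. -/
lemma conj_mem_rangeIdeal (D : NonUnitalStarSubalgebra ℂ A)
    (hD : IsClosed (D : Set A)) (hab : ∀ x ∈ D, ∀ y ∈ D, x * y = y * x)
    {n : A} (hn : IsNormalizer D n) {d : A} (hd : d ∈ D) :
    star n * d * n ∈ rangeIdeal (star n) D := by
  have hq : n * star n ∈ commMult D := by
    simpa using star_mul_self_mem_commMult D hD hab (isNormalizer_star hn)
  obtain ⟨J, hJ, hJD, hJmul⟩ := exists_rangeAlg D hD hab (isNormalizer_star hn)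
  have hJc : IsClosed (J : Set A) := hJ ▸ isClosed_closure
  obtain ⟨l, hl, hlB, hlt⟩ := exists_approx J hJc
  rw [← hJ]
  refine hJc.mem_of_tendsto (hlt _ ?_) ?_
  · rw [← SetLike.mem_coe, hJ]
    refine subset_closure ⟨star n * (star d * d) * n, (hn _ (mul_mem (star_mem hd) hd)).2, ?_⟩
    have h := (hq _ (star_mem hd)).2
    calc star (star n * d * n) * (star n * d * n)
        = star n * (star d * (n * star n)) * d * n := by simp [mul_assoc]
      _ = _ := by rw [← h]; simp [mul_assoc]
  · filter_upwards [hlB] with u hu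
    exact (hJmul _ (hn d hd).2 u hu.1).1

/-- The star subalgebra of pairs `(h, k) ∈ I × J` with `n k = h n` and `n⋆ h = k n⋆`. For
`I = closure (n n⋆ D)` and `J = closure (n⋆n D)` it is the graph of `θ_n`. The second equation is
the adjoint of the first for `(h⋆, k⋆)`; it is imposed to make the set closed under `star`. -/
def thetaGraph (I J : NonUnitalStarSubalgebra ℂ A) (n : A) :
    NonUnitalStarSubalgebra ℂ (A × A) where
  carrier := {x | (x.1 ∈ I ∧ x.2 ∈ J) ∧ n * x.2 = x.1 * n ∧ star n * x.1 = x.2 * star n}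
  add_mem' {x y} hx hy := by
    refine ⟨⟨add_mem hx.1.1 hy.1.1, add_mem hx.1.2 hy.1.2⟩, ?_, ?_⟩
    · simp [mul_add, add_mul, hx.2.1, hy.2.1]
    · simp [mul_add, add_mul, hx.2.2, hy.2.2]
  zero_mem' := by simp
  mul_mem' {x y} hx hy := by
    refine ⟨⟨mul_mem hx.1.1 hy.1.1, mul_mem hx.1.2 hy.1.2⟩, ?_, ?_⟩
    · simp only [Prod.fst_mul, Prod.snd_mul]
      rw [← mul_assoc, hx.2.1, mul_assoc, hy.2.1, mul_assoc]
    · simp only [Prod.fst_mul, Prod.snd_mul]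
      rw [← mul_assoc, hx.2.2, mul_assoc, hy.2.2, mul_assoc]
  smul_mem' c x hx := by
    refine ⟨⟨SMulMemClass.smul_mem c hx.1.1, SMulMemClass.smul_mem c hx.1.2⟩, ?_, ?_⟩
    · simp [mul_smul_comm, smul_mul_assoc, hx.2.1]
    · simp [mul_smul_comm, smul_mul_assoc, hx.2.2]
  star_mem' {x} hx := by
    refine ⟨⟨star_mem hx.1.1, star_mem hx.1.2⟩, ?_, ?_⟩
    · simpa using (congrArg star hx.2.2).symm
    · simpa using (congrArg star hx.2.1).symm

lemma isClosed_thetaGraph {I J : NonUnitalStarSubalgebra ℂ A} (hI : IsClosed (I : Set A))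
    (hJ : IsClosed (J : Set A)) (n : A) : IsClosed (thetaGraph I J n : Set (A × A)) := by
  refine IsClosed.inter ((hI.preimage continuous_fst).inter (hJ.preimage continuous_snd))
    (IsClosed.inter ?_ ?_)
  · exact isClosed_eq (by fun_prop) (by fun_prop)
  · exact isClosed_eq (by fun_prop) (by fun_prop)

/-- A star homomorphism that is injective on a closed star subalgebra `G` is isometric on `G`, so it
maps `G` onto a closed set. -/
lemma norm_map_and_image_closed {B C : Type*} [NonUnitalCStarAlgebra B] [NonUnitalCStarAlgebra C]
    (G : NonUnitalStarSubalgebra ℂ B) (hG : IsClosed (G : Set B)) (φ : B →⋆ₙₐ[ℂ] C)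
    (hφ : ∀ x ∈ G, φ x = 0 → x = 0) :
    (∀ x ∈ G, ‖φ x‖ = ‖x‖) ∧ IsClosed (φ '' (G : Set B)) := by
  have := hG
  let ψ : G →⋆ₙₐ[ℂ] C := φ.comp (NonUnitalStarSubalgebraClass.subtype G)
  have hψ : Function.Injective ψ := by
    rw [injective_iff_map_eq_zero]
    intro x hx
    exact Subtype.ext (hφ x x.2 hx)
  refine ⟨fun x hx => NonUnitalStarAlgHom.norm_map ψ hψ ⟨x, hx⟩, ?_⟩
  have h := (NonUnitalStarAlgHom.isometry ψ hψ).isClosedEmbedding.isClosed_range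
  convert h using 1
  ext y
  simp [ψ]

end CartanPaper

/-- Let `(A, D)` be an inclusion of C*-algebras and let `n ∈ N(A, D)`.
Then the norm closures of `n n* D` and `n* n D` are (closed two-sided) ideals of `D`, and the
map `n n* d ↦ n* d n` extends uniquely to a *-isomorphism `θ_n` from the closure of `n n* D`
onto the closure of `n* n D` satisfying `n * θ_n h = h * n` for every `h` in the closure of
`n n* D`. -/
theorem stmt_5 {A : Type*} [NonUnitalCStarAlgebra A]
    (D : NonUnitalStarSubalgebra ℂ A) (hDclosed : IsClosed (D : Set A))
    (hDabelian : ∀ x ∈ D, ∀ y ∈ D, x * y = y * x)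
    (n : A) (hn : IsNormalizer D n) :
    (rangeIdeal n D ⊆ (D : Set A)) ∧ (rangeIdeal (star n) D ⊆ (D : Set A)) ∧
    (∀ x ∈ rangeIdeal n D, ∀ y ∈ rangeIdeal n D, x + y ∈ rangeIdeal n D) ∧
    (∀ c : ℂ, ∀ x ∈ rangeIdeal n D, c • x ∈ rangeIdeal n D) ∧
    (∀ d ∈ D, ∀ x ∈ rangeIdeal n D, d * x ∈ rangeIdeal n D ∧ x * d ∈ rangeIdeal n D) ∧
    (∀ x ∈ rangeIdeal (star n) D, ∀ y ∈ rangeIdeal (star n) D,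
      x + y ∈ rangeIdeal (star n) D) ∧
    (∀ c : ℂ, ∀ x ∈ rangeIdeal (star n) D, c • x ∈ rangeIdeal (star n) D) ∧
    (∀ d ∈ D, ∀ x ∈ rangeIdeal (star n) D,
      d * x ∈ rangeIdeal (star n) D ∧ x * d ∈ rangeIdeal (star n) D) ∧
    (∃ θ : A → A, ThetaProps D n θ ∧
      ∀ θ' : A → A, ThetaProps D n θ' → Set.EqOn θ θ' (rangeIdeal n D)) := by
  have hns := isNormalizer_star hn
  have hp := star_mul_self_mem_commMult D hDclosed hDabelian hn
  have hq : n * star n ∈ commMult D := by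
    simpa using star_mul_self_mem_commMult D hDclosed hDabelian hns
  have injJ : ∀ k ∈ rangeIdeal (star n) D, n * k = 0 → k = 0 :=
    fun k hk h => eq_zero_of_mul_eq_zero D hk h
  have injI : ∀ h ∈ rangeIdeal n D, star n * h = 0 → h = 0 :=
    fun h hh h0 => eq_zero_of_mul_eq_zero D (n := star n) (by rwa [star_star]) h0
  have conjJ : ∀ d ∈ D, star n * d * n ∈ rangeIdeal (star n) D :=
    fun d hd => conj_mem_rangeIdeal D hDclosed hDabelian hn hd
  have conjI : ∀ d ∈ D, n * d * star n ∈ rangeIdeal n D := fun d hd => by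
    simpa using conj_mem_rangeIdeal D hDclosed hDabelian hns hd
  have rangeI : rangeIdeal n D = closure {x : A | ∃ d ∈ D, x = n * star n * d} := rfl
  have rangeJ : rangeIdeal (star n) D = closure {x : A | ∃ d ∈ D, x = star n * n * d} := by
    rw [rangeIdeal, star_star]
  have genI : ∀ d ∈ D, n * star n * d ∈ rangeIdeal n D :=
    fun d hd => rangeI ▸ subset_closure ⟨d, hd, rfl⟩
  have genJ : ∀ d ∈ D, star n * n * d ∈ rangeIdeal (star n) D :=
    fun d hd => rangeJ ▸ subset_closure ⟨d, hd, rfl⟩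
  obtain ⟨I, hI, hID, hImul⟩ := exists_rangeAlg D hDclosed hDabelian hn
  obtain ⟨J, hJ, hJD, hJmul⟩ := exists_rangeAlg D hDclosed hDabelian hns
  have hIc : IsClosed (I : Set A) := hI ▸ isClosed_closure
  have hJc : IsClosed (J : Set A) := hJ ▸ isClosed_closure
  unfold ThetaProps
  rw [← hI] at injI conjI rangeI genI
  rw [← hJ] at injJ conjJ rangeJ genJ
  rw [← hI, ← hJ]
  simp only [SetLike.mem_coe] at *
  refine ⟨hID, hJD, fun x hx y hy => add_mem hx hy, fun c x hx => SMulMemClass.smul_mem c hx,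
    hImul, fun x hx y hy => add_mem hx hy, fun c x hx => SMulMemClass.smul_mem c hx, hJmul, ?_⟩
  set G := thetaGraph I J n with hG
  have hGc : IsClosed (G : Set (A × A)) := isClosed_thetaGraph hIc hJc n
  obtain ⟨norm1, closed1⟩ := norm_map_and_image_closed G hGc (NonUnitalStarAlgHom.fst ℂ A A) (by
    rintro ⟨h, k⟩ hx (h0 : h = 0)
    subst h0
    have := injJ k hx.1.2 (by simpa using hx.2.1)
    simp [this])
  obtain ⟨norm2, closed2⟩ := norm_map_and_image_closed G hGc (NonUnitalStarAlgHom.snd ℂ A A) (by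
    rintro ⟨h, k⟩ hx (h0 : k = 0)
    subst h0
    have := injI h hx.1.1 (by simpa using hx.2.2)
    simp [this])
  have gen : ∀ d ∈ D, (n * star n * d, star n * d * n) ∈ G := fun d hd =>
    ⟨⟨genI d hd, conjJ d hd⟩, by simp [mul_assoc], by
      change star n * (n * star n * d) = star n * d * n * star n
      rw [(hq d hd).2]; simp [mul_assoc]⟩
  have gen' : ∀ d ∈ D, (n * d * star n, star n * n * d) ∈ G := fun d hd =>
    ⟨⟨conjI d hd, genJ d hd⟩, by
      change n * (star n * n * d) = n * d * star n * n
      rw [(hp d hd).2]; simp [mul_assoc], by simp [mul_assoc]⟩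
  -- Both coordinate projections of `G` have closed range, and it contains a dense subset.
  have ex1 : ∀ h ∈ I, ∃ k, (h, k) ∈ G := by
    intro h hh
    have : h ∈ NonUnitalStarAlgHom.fst ℂ A A '' (G : Set (A × A)) := by
      rw [← SetLike.mem_coe, rangeI] at hh
      refine closure_minimal ?_ closed1 hh
      rintro _ ⟨d, hd, rfl⟩
      exact ⟨_, gen d hd, rfl⟩
    obtain ⟨⟨_, k⟩, hk, rfl⟩ := this
    exact ⟨k, hk⟩
  have ex2 : ∀ k ∈ J, ∃ h, (h, k) ∈ G := by
    intro k hk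
    have : k ∈ NonUnitalStarAlgHom.snd ℂ A A '' (G : Set (A × A)) := by
      rw [← SetLike.mem_coe, rangeJ] at hk
      refine closure_minimal ?_ closed2 hk
      rintro _ ⟨d, hd, rfl⟩
      exact ⟨_, gen' d hd, rfl⟩
    obtain ⟨⟨h, _⟩, hG', rfl⟩ := this
    exact ⟨h, hG'⟩
  have norm_eq : ∀ h k, (h, k) ∈ G → ‖k‖ = ‖h‖ := fun h k hx =>
    (norm2 _ hx).trans (norm1 _ hx).symm
  have uniq : ∀ h k k', (h, k) ∈ G → k' ∈ J → n * k' = h * n → k = k' := by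
    intro h k k' hx hk' e
    refine sub_eq_zero.1 (injJ _ (sub_mem hx.1.2 hk') ?_)
    rw [mul_sub, e, hx.2.1, sub_self]
  have uniqG : ∀ h k k', (h, k) ∈ G → (h, k') ∈ G → k = k' := fun h k k' hx hx' =>
    uniq h k k' hx hx'.1.2 hx'.2.1
  choose! θ hθ using ex1
  refine ⟨θ, ⟨⟨fun h hh => (hθ h hh).1.2, ?_, ?_⟩, ?_, ?_, ?_, ?_, ?_, ?_, ?_⟩, ?_⟩
  · intro x hx y hy e
    have h : ‖θ x - θ y‖ = ‖x - y‖ := norm_eq _ _ (sub_mem (hθ x hx) (hθ y hy))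
    rw [e, sub_self, norm_zero] at h
    exact sub_eq_zero.1 (norm_eq_zero.1 h.symm)
  · intro k hk
    obtain ⟨h, hx⟩ := ex2 k hk
    exact ⟨h, hx.1.1, uniqG _ _ _ (hθ h hx.1.1) hx⟩
  · refine LipschitzOnWith.continuousOn (K := 1) (LipschitzOnWith.of_dist_le_mul ?_)
    intro x hx y hy
    rw [dist_eq_norm, dist_eq_norm, NNReal.coe_one, one_mul]
    exact (norm_eq _ _ (sub_mem (hθ x hx) (hθ y hy))).le
  · exact fun x hx y hy => uniqG _ _ _ (hθ _ (add_mem hx hy)) (add_mem (hθ x hx) (hθ y hy))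
  · exact fun c x hx => uniqG _ _ _ (hθ _ (SMulMemClass.smul_mem c hx))
      (SMulMemClass.smul_mem c (hθ x hx))
  · exact fun x hx y hy => uniqG _ _ _ (hθ _ (mul_mem hx hy)) (mul_mem (hθ x hx) (hθ y hy))
  · exact fun x hx => uniqG _ _ _ (hθ _ (star_mem hx)) (star_mem (hθ x hx))
  · exact fun d hd => uniqG _ _ _ (hθ _ (genI d hd)) (gen d hd)
  · exact fun h hh => (hθ h hh).2.1
  · rintro θ' ⟨hbij, -, -, -, -, -, -, hcomm⟩ h hh
    exact uniq _ _ _ (hθ h hh) (hbij.mapsTo hh) (hcomm h hh)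
end

section
/- Let (A,D) be a MASA inclusion of C*-algebras with A non-unital and with the approximate unit property, and let B be a unital C*-algebra containing A as an essential ideal. Put D_B = {b ∈ B : bD ∪ Db ⊆ D}. Then (B, D_B) is a MASA inclusion, N(A,D) ⊆ N(B, D_B), and in fact for every n ∈ N(A,D) and every b ∈ D_B one has nbn* ∈ D and n*bn ∈ D. -/
/-!
The proof rests on two consequences of the approximate unit `u i ∈ D`. An element `b ∈ D_B` commutes
with `D`, since `b * u i * d = d * (b * u i)` and both sides converge; and an element of `B` that
annihilates `D` from the left annihilates `A`, hence vanishes because `A` is essential.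

For `b, c ∈ D_B` and `d ∈ D` the first fact gives `b * c * d = c * b * d`, and the second gives
`b * c = c * b`, so `D_B` is abelian. Conversely, if `b` commutes with `D_B ⊇ D`, then each `b * d`
lies in `A` and commutes with `D`, hence lies in `D` by maximality. For a normalizer `n ∈ A`,
`n * b * star n` is the limit of `n * (b * u i) * star n ∈ D`, and `D` is closed.
-/

open scoped ComplexOrder
open Filter Topology

open CartanPaper

/-- The relative multiplier-type algebra `D_B = {b ∈ B : b D ∪ D b ⊆ D}`. -/
def CartanPaper.DBset {B : Type*} [CStarAlgebra B] (D : NonUnitalStarSubalgebra ℂ B) :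
    Set B :=
  {b : B | ∀ d ∈ D, b * d ∈ D ∧ d * b ∈ D}

/-- Let `(A, D)` be a MASA inclusion of C*-algebras with `A` non-unital and
with the approximate unit property, and let `B` be a unital C*-algebra containing `A` as an
essential ideal.  Put `D_B = {b ∈ B : b D ∪ D b ⊆ D}`.  Then `(B, D_B)` is a MASA inclusion,
`N(A, D) ⊆ N(B, D_B)`, and in fact `n b n* ∈ D` and `n* b n ∈ D` for every `n ∈ N(A, D)` and
every `b ∈ D_B`. -/
theorem stmt_8 {B : Type*} [CStarAlgebra B]
    -- `A`: a non-unital C*-algebra which is an essential (closed, two-sided) ideal of `B`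
    (A : NonUnitalStarSubalgebra ℂ B) (hAclosed : IsClosed (A : Set B))
    (hAideal : ∀ b : B, ∀ a ∈ A, b * a ∈ A ∧ a * b ∈ A)
    (hAessential : ∀ b : B, (∀ a ∈ A, b * a = 0) → b = 0)
    (hAnonunital : ¬∃ e ∈ A, ∀ a ∈ A, e * a = a ∧ a * e = a)
    -- `D`: a MASA in `A`
    (D : NonUnitalStarSubalgebra ℂ B) (hDclosed : IsClosed (D : Set B))
    (hDA : (D : Set B) ⊆ (A : Set B))
    (hmasa : {b : B | b ∈ A ∧ ∀ d ∈ D, b * d = d * b} = (D : Set B))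
    -- the approximate unit property: `D` contains an approximate unit for `A`
    {ι : Type*} [Preorder ι] [IsDirected ι (· ≤ ·)] [Nonempty ι] (u : ι → B)
    (humem : ∀ i, u i ∈ D)
    (hupos : ∀ i, ∃ v ∈ D, u i = star v * v)
    (hunorm : ∀ i, ‖u i‖ ≤ 1)
    (happrox : ∀ a ∈ A, Tendsto (fun i => u i * a) atTop (𝓝 a) ∧
      Tendsto (fun i => a * u i) atTop (𝓝 a)) :
    -- `(B, D_B)` is a MASA inclusion:
    ({b : B | ∀ c ∈ CartanPaper.DBset D, b * c = c * b} = CartanPaper.DBset D) ∧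
    -- `N(A, D) ⊆ N(B, D_B)`, and moreover `n D_B n* ∪ n* D_B n ⊆ D`:
    ∀ n ∈ A, (∀ d ∈ D, n * d * star n ∈ D ∧ star n * d * n ∈ D) →
      (∀ b ∈ CartanPaper.DBset D,
        n * b * star n ∈ CartanPaper.DBset D ∧ star n * b * n ∈ CartanPaper.DBset D) ∧
      (∀ b ∈ CartanPaper.DBset D, n * b * star n ∈ D ∧ star n * b * n ∈ D) := by
  have hD : ∀ b, b ∈ D ↔ b ∈ A ∧ ∀ d ∈ D, b * d = d * b := fun b =>
    (Set.ext_iff.mp hmasa b).symm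
  have hDDB : ∀ d ∈ D, d ∈ CartanPaper.DBset D := fun d hd e he =>
    ⟨D.mul_mem hd he, D.mul_mem he hd⟩
  have hcommD : ∀ b ∈ CartanPaper.DBset D, ∀ d ∈ D, b * d = d * b := by
    intro b hb d hd
    have h1 : Tendsto (fun i => b * (u i * d)) atTop (𝓝 (b * d)) :=
      ((happrox d (hDA hd)).1).const_mul b
    have h2 : Tendsto (fun i => d * b * u i) atTop (𝓝 (d * b)) :=
      (happrox (d * b) (hDA (hb d hd).2)).2
    refine tendsto_nhds_unique h1 (h2.congr fun i => ?_)
    rw [← mul_assoc b, ((hD _).1 (hb _ (humem i)).1).2 d hd, mul_assoc]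
  have hzero : ∀ x : B, (∀ d ∈ D, x * d = 0) → x = 0 := by
    intro x hx
    refine hAessential x fun a ha => ?_
    have h1 : Tendsto (fun i => x * (u i * a)) atTop (𝓝 (x * a)) :=
      ((happrox a ha).1).const_mul x
    refine tendsto_nhds_unique h1 (tendsto_const_nhds.congr fun i => ?_)
    rw [← mul_assoc, hx _ (humem i), zero_mul]
  -- Stated for two factors `m, k` so as to cover both `n * b * star n` and `star n * b * n`.
  have hlim : ∀ m k : B, k ∈ A → (∀ d ∈ D, m * d * k ∈ D) →
      ∀ b ∈ CartanPaper.DBset D, m * b * k ∈ D := by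
    intro m k hk hm b hb
    have h1 : Tendsto (fun i => m * b * (u i * k)) atTop (𝓝 (m * b * k)) :=
      ((happrox k hk).1).const_mul (m * b)
    refine hDclosed.mem_of_tendsto h1 (Eventually.of_forall fun i => ?_)
    have h2 := hm _ (hb _ (humem i)).1
    simpa only [mul_assoc, SetLike.mem_coe] using h2
  refine ⟨Set.Subset.antisymm ?_ ?_, ?_⟩
  · intro b hb d hd
    have hbD : ∀ e ∈ D, b * e = e * b := fun e he => hb e (hDDB e he)
    have hbd : b * d ∈ D := by
      refine (hD _).2 ⟨(hAideal b d (hDA hd)).1, fun e he => ?_⟩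
      rw [mul_assoc, ((hD d).1 hd).2 e he, ← mul_assoc, hbD e he, mul_assoc]
    exact ⟨hbd, hbD d hd ▸ hbd⟩
  · intro b hb c hc
    refine sub_eq_zero.1 (hzero _ fun d hd => ?_)
    rw [sub_mul, sub_eq_zero, mul_assoc, hcommD b hb _ (hc d hd).1, mul_assoc, mul_assoc,
      hcommD b hb d hd]
  · intro n hn hnorm
    have key : ∀ b ∈ CartanPaper.DBset D, n * b * star n ∈ D ∧ star n * b * n ∈ D :=
      fun b hb => ⟨hlim n (star n) (star_mem hn) (fun d hd => (hnorm d hd).1) b hb,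
        hlim (star n) n hn (fun d hd => (hnorm d hd).2) b hb⟩
    exact ⟨fun b hb => ⟨hDDB _ (key b hb).1, hDDB _ (key b hb).2⟩, key⟩
end

section
/- Let (A,D) be an inclusion of C*-algebras and let n ∈ N(A,D) be a free normalizer, i.e., n² = 0. If ρ is a state on A whose restriction to D is a pure state on D, then ρ(n) = 0. -/
/-!
The restriction `σ` of `ρ` to `D` is an extreme state of an abelian C⋆-algebra, hence
multiplicative (`pure_mul`). Choose a self-adjoint `d ∈ D` with `σ d = σ (d * d) = 1`. Such a `d`
acts under `ρ` as a unit: `ρ (x * d) = ρ x` for all `x ∈ A` (`map_mul_eq`). Cauchy–Schwarz then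
gives `|ρ n|² ≤ σ a` and `|ρ n|² ≤ σ b` for `a = n d² n*` and `b = n* d² n`, both of which lie in
`D` because `n` is a normalizer. Since `n² = 0`, also `a b = 0`, so multiplicativity of `σ` forces
`σ a = 0` or `σ b = 0`, and in either case `ρ n = 0`.

`A` and `D` need not be unital, and `D` need not contain an approximate unit of `A`; arguments with
the unit are replaced by limits along an approximate unit. In particular a positive functional `f`
satisfies `f (e* e) → ‖f‖` (`eventually_lt`), which makes the norm additive on positive functionals
(`norm_add_le_norm`) and drives the proof that extreme states are multiplicative.
-/

open scoped ComplexOrder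
open Filter Topology

open CartanPaper

namespace FreeNormalizer

variable {A : Type*} [NonUnitalCStarAlgebra A]

/-- A continuous functional that is nonnegative on all `star a * a`, bundled as an order-preserving
linear map, so that Mathlib's GNS pre-inner product applies. -/
def toPositiveLinearMap [PartialOrder A] [StarOrderedRing A] (f : A →L[ℂ] ℂ)
    (hf : ∀ a : A, 0 ≤ f (star a * a)) : A →ₚ[ℂ] ℂ :=
  PositiveLinearMap.mk₀ f.toLinearMap (by
    intro a ha
    obtain ⟨b, rfl⟩ := CStarAlgebra.nonneg_iff_eq_star_mul_self.mp ha
    exact hf b)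

/-- The Cauchy–Schwarz inequality for the form `(x, y) ↦ f (star x * y)`. -/
theorem cauchy_schwarz (f : A →L[ℂ] ℂ) (hf : ∀ a : A, 0 ≤ f (star a * a)) (x y : A) :
    ‖f (star x * y)‖ ^ 2 ≤ (f (star x * x)).re * (f (star y * y)).re := by
  let _ := CStarAlgebra.spectralOrder A
  let _ := CStarAlgebra.spectralOrderedRing A
  let F := toPositiveLinearMap f hf
  have h := norm_inner_le_norm (𝕜 := ℂ) (F.toPreGNS x) (F.toPreGNS y)
  have h2 := pow_le_pow_left₀ (norm_nonneg _) h 2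
  rw [mul_pow, PositiveLinearMap.preGNS_norm_def, PositiveLinearMap.preGNS_norm_def,
    PositiveLinearMap.ofPreGNS_toPreGNS, PositiveLinearMap.ofPreGNS_toPreGNS,
    Real.sq_sqrt (show 0 ≤ (F (star x * x)).re from (Complex.nonneg_iff.mp (hf x)).1),
    Real.sq_sqrt (show 0 ≤ (F (star y * y)).re from (Complex.nonneg_iff.mp (hf y)).1)] at h2
  exact h2

theorem map_star_eq (f : A →L[ℂ] ℂ) (hf : ∀ a : A, 0 ≤ f (star a * a)) (x : A) :
    f (star x) = star (f x) := by
  let _ := CStarAlgebra.spectralOrder A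
  let _ := CStarAlgebra.spectralOrderedRing A
  let F := toPositiveLinearMap f hf
  exact map_star F x

/-- A self-adjoint contractive approximate unit, refined to an ultrafilter so that a property which
fails to hold eventually along it fails eventually. -/
theorem exists_unit (A : Type*) [NonUnitalCStarAlgebra A] : ∃ l : Ultrafilter A,
    (∀ m : A, Tendsto (fun e => e * m) l (𝓝 m)) ∧
    (∀ m : A, Tendsto (fun e => m * e) l (𝓝 m)) ∧
    ∀ᶠ e in (l : Filter A), star e = e ∧ ‖e‖ ≤ 1 := by
  let _ := CStarAlgebra.spectralOrder A
  let _ := CStarAlgebra.spectralOrderedRing A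
  have h := CStarAlgebra.increasingApproximateUnit A
  refine ⟨Ultrafilter.of (CStarAlgebra.approximateUnit A), fun m => ?_, fun m => ?_, ?_⟩
  · exact (h.tendsto_mul_right m).mono_left (Ultrafilter.of_le _)
  · exact (h.tendsto_mul_left m).mono_left (Ultrafilter.of_le _)
  · exact Filter.Eventually.filter_mono (Ultrafilter.of_le _)
      (h.eventually_star_eq.and h.eventually_norm)

theorem re_map_star_mul_self_le (f : A →L[ℂ] ℂ) (x : A) :
    (f (star x * x)).re ≤ ‖f‖ * ‖x‖ ^ 2 := by
  calc _ ≤ ‖f (star x * x)‖ := Complex.re_le_norm _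
    _ ≤ ‖f‖ * ‖star x * x‖ := f.le_opNorm _
    _ = _ := by rw [CStarRing.norm_star_mul_self, sq]

theorem norm_sq_le_of_eventually (f : A →L[ℂ] ℂ) (hf : ∀ a : A, 0 ≤ f (star a * a))
    {l : Ultrafilter A} (hl : ∀ m : A, Tendsto (fun e => e * m) l (𝓝 m))
    (hs : ∀ᶠ e in (l : Filter A), star e = e) {c : ℝ}
    (hc : ∀ᶠ e in (l : Filter A), (f (star e * e)).re ≤ c) (x : A) :
    ‖f x‖ ^ 2 ≤ c * (f (star x * x)).re := by
  have ht : Tendsto (fun e => ‖f (e * x)‖ ^ 2) l (𝓝 (‖f x‖ ^ 2)) :=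
    (((f.continuous.tendsto x).comp (hl x)).norm).pow 2
  refine le_of_tendsto ht ?_
  filter_upwards [hc, hs] with e he hse
  have h := cauchy_schwarz f hf e x
  have h0 := (Complex.nonneg_iff.mp (hf x)).1
  rw [hse] at h he
  exact h.trans (mul_le_mul_of_nonneg_right he h0)

/-- The nonunital substitute for Cauchy–Schwarz against the unit. -/
theorem norm_sq_le (f : A →L[ℂ] ℂ) (hf : ∀ a : A, 0 ≤ f (star a * a)) (x : A) :
    ‖f x‖ ^ 2 ≤ ‖f‖ * (f (star x * x)).re := by
  obtain ⟨l, h1, -, h3⟩ := exists_unit A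
  refine norm_sq_le_of_eventually f hf h1 (h3.mono fun e h => h.1) (h3.mono fun e h => ?_) x
  refine (re_map_star_mul_self_le f e).trans ?_
  exact mul_le_of_le_one_right (norm_nonneg _) (pow_le_one₀ (norm_nonneg _) h.2)

/-- Together with the trivial bound `(f (star e * e)).re ≤ ‖f‖`, this says that
`f (star e * e)` converges to `‖f‖` along an approximate unit. -/
theorem eventually_lt (f : A →L[ℂ] ℂ) (hf : ∀ a : A, 0 ≤ f (star a * a))
    {l : Ultrafilter A} (hl : ∀ m : A, Tendsto (fun e => e * m) l (𝓝 m))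
    (hs : ∀ᶠ e in (l : Filter A), star e = e) {c : ℝ} (hc : c < ‖f‖) :
    ∀ᶠ e in (l : Filter A), c < (f (star e * e)).re := by
  by_contra hcon
  rw [← Ultrafilter.eventually_not] at hcon
  simp only [not_lt] at hcon
  have hc0 : 0 ≤ c := by
    obtain ⟨e, he⟩ := hcon.exists
    exact (Complex.nonneg_iff.mp (hf e)).1.trans he
  have hpos : 0 < ‖f‖ := hc0.trans_lt hc
  have key : ‖f‖ ≤ Real.sqrt (c * ‖f‖) := by
    refine f.opNorm_le_bound (Real.sqrt_nonneg _) fun x => ?_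
    refine Real.le_sqrt_of_sq_le ?_ |>.trans_eq
      (b := Real.sqrt (c * ‖f‖ * ‖x‖ ^ 2)) ?_
    · have h := norm_sq_le_of_eventually f hf hl hs hcon x
      have h2 := mul_le_mul_of_nonneg_left (re_map_star_mul_self_le f x) hc0
      linarith
    · rw [Real.sqrt_mul (by positivity), Real.sqrt_sq (norm_nonneg _)]
  have h2 := pow_le_pow_left₀ hpos.le key 2
  rw [Real.sq_sqrt (by positivity)] at h2
  nlinarith

/-- The norm is additive on positive functionals (the nontrivial inequality). -/
theorem norm_add_le_norm (f g : A →L[ℂ] ℂ) (hf : ∀ a : A, 0 ≤ f (star a * a))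
    (hg : ∀ a : A, 0 ≤ g (star a * a)) : ‖f‖ + ‖g‖ ≤ ‖f + g‖ := by
  obtain ⟨l, h1, -, h3⟩ := exists_unit A
  have hs := h3.mono fun e h => h.1
  refine le_of_forall_pos_lt_add fun ε hε => ?_
  obtain ⟨e, ⟨he, hfe⟩, hge⟩ := ((h3.and (eventually_lt f hf h1 hs (c := ‖f‖ - ε / 2)
    (by linarith))).and (eventually_lt g hg h1 hs (c := ‖g‖ - ε / 2) (by linarith))).exists
  have h4 := re_map_star_mul_self_le (f + g) e
  have h5 : ‖f + g‖ * ‖e‖ ^ 2 ≤ ‖f + g‖ :=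
    mul_le_of_le_one_right (norm_nonneg _) (pow_le_one₀ (norm_nonneg _) he.2)
  simp only [add_apply, Complex.add_re] at h4
  linarith

/-- If `f d = f (star d * d) = 1`, then `1 - d`, formally, is a null vector for the state `f`, so
right multiplication by `d` does not change `f`. The unit is replaced by an approximate unit. -/
theorem map_mul_eq (f : A →L[ℂ] ℂ) (hf : IsState f) {d : A} (hd : f d = 1)
    (hdd : f (star d * d) = 1) (x : A) : f (x * d) = f x := by
  obtain ⟨l, h1, h2, h3⟩ := exists_unit A
  have hsd : f (star d) = 1 := by rw [map_star_eq f hf.2, hd, star_one]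
  have ht : Tendsto (fun e => ‖f (x * e - x * d)‖ ^ 2) l (𝓝 (‖f (x - x * d)‖ ^ 2)) :=
    (((f.continuous.tendsto _).comp ((h2 x).sub_const _)).norm).pow 2
  have ht2 : Tendsto (fun e => (f (star (star x) * star x)).re *
      (2 - (f (e * d)).re - (f (star d * e)).re)) l
      (𝓝 ((f (star (star x) * star x)).re * (2 - (f d).re - (f (star d)).re))) := by
    refine Tendsto.const_mul _ (Tendsto.sub (Tendsto.sub tendsto_const_nhds ?_) ?_)
    · exact (Complex.continuous_re.comp f.continuous).tendsto _ |>.comp (h1 d)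
    · exact (Complex.continuous_re.comp f.continuous).tendsto _ |>.comp (h2 (star d))
  have hle := le_of_tendsto_of_tendsto ht ht2 (by
    filter_upwards [h3] with e he
    have hcs := cauchy_schwarz f hf.2 (star x) (e - d)
    have h0 := (Complex.nonneg_iff.mp (hf.2 (star x))).1
    rw [star_star, mul_sub] at hcs
    refine hcs.trans ?_
    rw [star_star]
    refine mul_le_mul_of_nonneg_left ?_ (by simpa using h0)
    have h5 := re_map_star_mul_self_le f e
    rw [hf.1, one_mul] at h5
    have h6 := h5.trans (pow_le_one₀ (norm_nonneg _) he.2)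
    rw [he.1] at h6
    rw [star_sub, he.1, sub_mul, mul_sub, mul_sub, map_sub, map_sub, map_sub, hdd]
    simp only [Complex.sub_re, Complex.one_re]
    linarith)
  rw [hd, hsd] at hle
  norm_num at hle
  exact (sub_eq_zero.mp hle).symm

/-- With `a = star c * c ≤ 1`, the functionals `φ = σ (a * ·)` and `σ - φ` are positive and their
norms add up to `1`, so extremality of `σ` makes `φ` a multiple of `σ`. Evaluation along an
approximate unit identifies the factor `‖φ‖` as `σ a`. -/
theorem pure_mul_of_norm_le_one {E : Type*} [NonUnitalCStarAlgebra E]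
    (hcomm : ∀ x y : E, x * y = y * x) (σ : E →L[ℂ] ℂ)
    (hσ : σ ∈ Set.extremePoints ℝ {φ : E →L[ℂ] ℂ | IsState φ}) (c : E) (hc : ‖c‖ ≤ 1) (x : E) :
    σ (star c * c * x) = σ (star c * c) * σ x := by
  obtain ⟨⟨hn, hpos⟩, hext⟩ := mem_extremePoints.mp hσ
  set φ : E →L[ℂ] ℂ := σ ∘L ContinuousLinearMap.mul ℂ E (star c * c) with hφ
  have hφa : ∀ x, φ x = σ (star c * c * x) := fun x => rfl
  have hφpos : ∀ a : E, 0 ≤ φ (star a * a) := by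
    intro a
    have : star c * c * (star a * a) = star (c * a) * (c * a) := by
      rw [star_mul, ← mul_assoc, hcomm (star c * c) (star a)]; simp only [mul_assoc]
    rw [hφa, this]; exact hpos _
  have hψpos : ∀ a : E, 0 ≤ (σ - φ) (star a * a) := by
    intro a
    let _ := CStarAlgebra.spectralOrder E
    let _ := CStarAlgebra.spectralOrderedRing E
    have h1 : star a * (star c * c) * a ≤ star a * a := by
      refine (CStarAlgebra.star_left_conjugate_le_norm_smul (IsSelfAdjoint.star_mul_self c)).trans ?_
      refine smul_le_of_le_one_left (star_mul_self_nonneg a) ?_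
      rw [CStarRing.norm_star_mul_self]
      exact mul_le_one₀ hc (norm_nonneg _) hc
    obtain ⟨b, hb⟩ := CStarAlgebra.nonneg_iff_eq_star_mul_self.mp (sub_nonneg.mpr h1)
    have h2 : (σ - φ) (star a * a) = σ (star b * b) := by
      rw [← hb, map_sub, sub_apply, hφa, ← mul_assoc,
        hcomm (star c * c) (star a)]
    rw [h2]; exact hpos b
  have hsum : ‖φ‖ + ‖σ - φ‖ = 1 := by
    refine le_antisymm ?_ ?_
    · have := norm_add_le_norm φ (σ - φ) hφpos hψpos
      rwa [add_sub_cancel, hn] at this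
    · have := norm_add_le φ (σ - φ)
      rwa [add_sub_cancel, hn] at this
  have hstate : ∀ g : E →L[ℂ] ℂ, (∀ a, 0 ≤ g (star a * a)) → 0 < ‖g‖ → IsState (‖g‖⁻¹ • g) := by
    intro g hg h0
    refine ⟨?_, fun a => ?_⟩
    · rw [norm_smul, norm_inv, norm_norm, inv_mul_cancel₀ h0.ne']
    · exact smul_nonneg (inv_nonneg.mpr h0.le) (hg a)
  have hprop : φ = ‖φ‖ • σ := by
    rcases (norm_nonneg φ).eq_or_lt with h0 | h0
    · rw [norm_eq_zero.mp h0.symm, norm_zero]; exact (zero_smul ℝ σ).symm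
    rcases (norm_nonneg (σ - φ)).eq_or_lt with h1 | h1
    · have h2 : ‖φ‖ = 1 := by linarith
      rw [h2, one_smul]; exact (sub_eq_zero.mp (norm_eq_zero.mp h1.symm)).symm
    have h2 := (hext _ (hstate φ hφpos h0) _ (hstate _ hψpos h1)
      ⟨‖φ‖, ‖σ - φ‖, h0, h1, hsum, by
        rw [smul_inv_smul₀ h0.ne', smul_inv_smul₀ h1.ne', add_sub_cancel]⟩).1
    rw [← h2, smul_inv_smul₀ h0.ne']
  have hmul : ∀ y, σ (star c * c * y) = ‖φ‖ * σ y := by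
    intro y
    rw [← hφa]
    conv_lhs => rw [hprop]
    simp
  obtain ⟨l, h1, h2, h3⟩ := exists_unit E
  have hlim1 : Tendsto (fun e => (σ (star e * e)).re) l (𝓝 1) := by
    rw [tendsto_order]
    refine ⟨fun b hb => eventually_lt σ hpos h1 (h3.mono fun e h => h.1) (hn ▸ hb), fun b hb => ?_⟩
    filter_upwards [h3] with e he
    have h5 := re_map_star_mul_self_le σ e
    rw [hn, one_mul] at h5
    exact (h5.trans (pow_le_one₀ (norm_nonneg _) he.2)).trans_lt hb
  have hlim2 : Tendsto (fun e => star c * c * (star e * e)) l (𝓝 (star c * c)) := by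
    have hz : Tendsto (fun e => (star c * c * e - star c * c) * e) l (𝓝 0) := by
      refine Filter.Tendsto.zero_mul_isBoundedUnder_le ?_ ?_
      · have := (h2 (star c * c)).sub_const (star c * c)
        rwa [sub_self] at this
      · exact Filter.isBoundedUnder_of_eventually_le (a := 1) (h3.mono fun e h => h.2)
    have := hz.add (h2 (star c * c))
    rw [zero_add] at this
    refine this.congr' ?_
    filter_upwards [h3] with e he
    rw [he.1, sub_mul, sub_add_cancel, mul_assoc]
  have hlim3 : Tendsto (fun e => ‖φ‖ * (σ (star e * e)).re) l (𝓝 (σ (star c * c)).re) := by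
    refine ((Complex.continuous_re.comp σ.continuous).tendsto _ |>.comp hlim2).congr fun e => ?_
    simp [hmul]
  have ht : ‖φ‖ * 1 = (σ (star c * c)).re := tendsto_nhds_unique (hlim1.const_mul _) hlim3
  have him : σ (star c * c) = ((σ (star c * c)).re : ℂ) :=
    Complex.ext rfl (by simpa using (Complex.nonneg_iff.mp (hpos c)).2.symm)
  rw [hmul, him, ← ht, mul_one]

/-- Pure states of abelian C⋆-algebras are multiplicative; only the case of a left factor
`star c * c` is needed. -/
theorem pure_mul {E : Type*} [NonUnitalCStarAlgebra E]
    (hcomm : ∀ x y : E, x * y = y * x) (σ : E →L[ℂ] ℂ)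
    (hσ : σ ∈ Set.extremePoints ℝ {φ : E →L[ℂ] ℂ | IsState φ}) (c x : E) :
    σ (star c * c * x) = σ (star c * c) * σ x := by
  rcases eq_or_ne c 0 with rfl | h0
  · simp
  have hn : ‖c‖ ≠ 0 := norm_ne_zero_iff.mpr h0
  have h := pure_mul_of_norm_le_one hcomm σ hσ ((‖c‖⁻¹ : ℂ) • c) (by
    rw [norm_smul]; simp [hn]) x
  have hn' : (‖c‖ : ℂ) ≠ 0 := by exact_mod_cast hn
  simp only [star_smul, smul_mul_assoc, mul_smul_comm, map_smul, smul_eq_mul] at h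
  have h1 : star ((‖c‖ : ℂ)⁻¹) ≠ 0 := by simpa using h0
  have h2 : ((‖c‖ : ℂ)⁻¹) ≠ 0 := inv_ne_zero hn'
  exact mul_left_cancel₀ h2 (mul_left_cancel₀ h1 (by linear_combination h))

end FreeNormalizer

open FreeNormalizer

/-- Let `(A, D)` be an inclusion of C*-algebras and let `n ∈ N(A, D)` be a
free normalizer, i.e. `n ^ 2 = 0`.  If `ρ` is a state on `A` whose restriction to `D` is a pure
state on `D` (an extreme point of the state space of `D`), then `ρ n = 0`. -/
theorem stmt_9 {A : Type*} [NonUnitalCStarAlgebra A]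
    (D : NonUnitalStarSubalgebra ℂ A) [IsClosed (D : Set A)]
    (hDabelian : ∀ x ∈ D, ∀ y ∈ D, x * y = y * x)
    (n : A) (hn : IsNormalizer D n) (hfree : n * n = 0)
    (ρ : A →L[ℂ] ℂ) (hρ : IsState ρ)
    (hpure : ∃ σ : D →L[ℂ] ℂ, (∀ x : D, σ x = ρ x) ∧
      σ ∈ Set.extremePoints ℝ {φ : D →L[ℂ] ℂ | IsState φ}) :
    ρ n = 0 := by
  obtain ⟨σ, hσρ, hσ⟩ := hpure
  have hσs : IsState σ := hσ.1
  have hmul := pure_mul (fun x y : D => Subtype.ext (hDabelian x x.2 y y.2)) σ hσ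
  obtain ⟨c, hc⟩ : ∃ c : D, σ (star c * c) ≠ 0 := by
    by_contra! hcon
    have h0 : σ = 0 := by
      ext x
      have := norm_sq_le σ hσs.2 x
      rw [hcon] at this
      simpa using this
    have := hσs.1
    simp [h0] at this
  -- The self-adjoint element `d ∈ D` satisfies `σ d = σ (d * d) = 1`.
  set d : D := (σ (star c * c))⁻¹ • (star c * c) with hd
  have hd1 : σ d = 1 := by simp [hd, hc]
  have hreal : star (σ (star c * c)) = σ (star c * c) := by
    rw [← map_star_eq σ hσs.2, star_mul, star_star]
  have hds : star d = d := by simp only [hd, star_smul, star_inv₀, hreal, star_mul, star_star]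
  have hdd : σ (star d * d) = 1 := by
    rw [hds]
    conv_lhs => rw [hd]
    rw [smul_mul_assoc, map_smul, hmul, map_smul]
    simp [hc]
  have hdsA : star (d : A) = d := congrArg Subtype.val hds
  have hρd : ρ (d : A) = 1 := by rw [← hσρ, hd1]
  have hρdd : ρ (star (d : A) * d) = 1 := by
    have := hσρ (star d * d)
    rw [hdd] at this
    exact this.symm
  -- `ρ` does not see `d`, hence `ρ (star m) = ρ (star m * d)`, and Cauchy–Schwarz brings in
  -- `star m * d² * m`, which lies in `D` for a normalizer `m` even when `star m * m` does not.
  have hbound : ∀ m : A, ‖ρ (star m)‖ ^ 2 ≤ (ρ (star m * (d * d) * m)).re := by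
    intro m
    have h := norm_sq_le ρ hρ.2 (d * m)
    have h1 : ρ (star m) = star (ρ (d * m)) := by
      rw [← map_star_eq ρ hρ.2, star_mul, hdsA, map_mul_eq ρ hρ hρd hρdd]
    rw [h1, norm_star]
    rw [hρ.1, one_mul, star_mul, hdsA] at h
    simpa only [mul_assoc] using h
  let a : D := ⟨n * (d * d) * star n, (hn _ (d * d).2).1⟩
  let b : D := ⟨star n * (d * d) * n, (hn _ (d * d).2).2⟩
  have has : star a = a := Subtype.ext (by
    change star (n * (d * d : A) * star n) = n * (d * d : A) * star n
    simp only [star_mul, hdsA, star_star, mul_assoc])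
  have hbs : star b = b := Subtype.ext (by
    change star (star n * (d * d : A) * n) = star n * (d * d : A) * n
    simp only [star_mul, hdsA, star_star, mul_assoc])
  have hab : a * b = 0 := Subtype.ext (by
    have : star n * star n = 0 := by rw [← star_mul, hfree, star_zero]
    change n * (d * d) * star n * (star n * (d * d) * n) = 0
    calc _ = n * (d * d) * (star n * star n) * ((d * d) * n) := by simp only [mul_assoc]
      _ = 0 := by rw [this]; simp)
  -- Multiplicativity is used for squares: `σ (a²) σ (b²) = σ (a² b²) = 0`.
  have hprod : σ (star a * a) * σ (star b * b) = 0 := by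
    rw [← hmul, has, hbs, mul_assoc, ← mul_assoc a b, hab]; simp
  have hzero : ∀ z : D, σ (star z * z) = 0 → ρ z = 0 := by
    intro z hz
    have := norm_sq_le σ hσs.2 z
    rw [hz] at this
    rw [← hσρ]
    simpa using this
  rcases mul_eq_zero.mp hprod with h | h
  · have h1 := hbound (star n)
    rw [star_star, show n * (d * d : A) * star n = (a : A) from rfl, hzero a h] at h1
    simpa using h1
  · have h1 := hbound n
    rw [show star n * (d * d : A) * n = (b : A) from rfl, hzero b h,
      map_star_eq ρ hρ.2, norm_star] at h1
    simpa using h1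
end

section
/- Let (A,D) be a regular MASA inclusion of C*-algebras. Then every approximate unit for D is also an approximate unit for A. -/
/-!
The heart of the matter is that `n * star n ∈ D` for every normalizer `n`. Granting this, the
C*-identity gives `‖u n - n‖² ≤ 2 ‖u (n n*) - n n*‖ → 0` (`tendsto_of_mul_star_mem`), and since `u`
is bounded and the normalizers span a dense subspace, `u a → a` for all `a`; the right-hand version
follows by taking adjoints.

As `D` is a MASA, it remains to show that `x = n n*` commutes with each `d ∈ D`. Because `D` is
abelian and `n* d n ∈ D`, elements `f = n e n*` with `e ∈ D` satisfy `f d x = x f d`; letting `d` run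
through the approximate unit, `f x = x f`, so `f (d x - x d) = 0`. By the C*-identity this gives
`e y = 0` for all `e ∈ D`, where `y = n* (d x - x d) = (n* d n) n* - n* n n* d`. Writing `y = b - w`
with `b`, `w` these two terms, `u b → b` because `n* d n ∈ D` and `u w → w` because `w w* ∈ D`, so
`u y → y`; hence `y = 0`. Therefore
`x (d x - x d) = 0` for every `d ∈ D`, which forces `x d = d x`.
-/

open scoped ComplexOrder
open Filter Topology

open CartanPaper

section Helpers

variable {A : Type*} [NonUnitalCStarAlgebra A] {D : NonUnitalStarSubalgebra ℂ A}
  {ι : Type*} [Preorder ι] {u : ι → A}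

/-- An approximate unit for `D` acts as a left approximate unit on any `w` with `w w* ∈ D`. -/
lemma tendsto_of_mul_star_mem (hunorm : ∀ i, ‖u i‖ ≤ 1)
    (happ : ∀ d ∈ D, Tendsto (fun i => u i * d) atTop (𝓝 d)) {w : A} (hw : w * star w ∈ D) :
    Tendsto (fun i => u i * w) atTop (𝓝 w) := by
  have h := tendsto_iff_norm_sub_tendsto_zero.1 (happ _ hw)
  have hbound : ∀ i, ‖u i * w - w‖ ^ 2 ≤ 2 * ‖u i * (w * star w) - w * star w‖ := by
    intro i
    set g := u i * (w * star w) - w * star w with hg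
    have e : (u i * w - w) * star (u i * w - w) = g * star (u i) - g := by
      simp only [hg, star_sub, star_mul]; noncomm_ring
    rw [sq, ← CStarRing.norm_self_mul_star, e]
    calc ‖g * star (u i) - g‖ ≤ ‖g * star (u i)‖ + ‖g‖ := norm_sub_le _ _
      _ ≤ ‖g‖ * ‖star (u i)‖ + ‖g‖ := by gcongr; exact norm_mul_le _ _
      _ ≤ ‖g‖ * 1 + ‖g‖ := by rw [norm_star]; gcongr; exact hunorm i
      _ = 2 * ‖g‖ := by ring
  have hsq : Tendsto (fun i => ‖u i * w - w‖ ^ 2) atTop (𝓝 0) :=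
    squeeze_zero (fun i => by positivity) hbound (by simpa using h.const_mul 2)
  rw [tendsto_iff_norm_sub_tendsto_zero]
  simpa using hsq.sqrt

/-- If `x` is self-adjoint and annihilates its commutators with `D`, then `x` commutes with `D`. -/
lemma comm_of_mul_comm_eq_zero {x : A} (hx : star x = x)
    (h : ∀ d ∈ D, x * (d * x) = x * (x * d)) {d : A} (hd : d ∈ D) : x * d = d * x := by
  have h1 := h _ hd
  have h2 : x * (star d * x) = x * (x * star d) := h _ (star_mem hd)
  have h3 : x * (star d * d * x) = x * (x * (star d * d)) := h _ (mul_mem (star_mem hd) hd)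
  rw [← sub_eq_zero, ← CStarRing.star_mul_self_eq_zero_iff]
  have e : star (x * d - d * x) * (x * d - d * x)
      = star d * (x * (x * d) - x * (d * x)) - (x * (star d * x)) * d + x * (star d * d * x) := by
    simp only [star_sub, star_mul, hx]; noncomm_ring
  rw [e, h1, h2, h3]; noncomm_ring

lemma IsNormalizer.mul_star_mem [IsDirected ι (· ≤ ·)] [Nonempty ι]
    (hmasa : IsMasa D) (humem : ∀ i, u i ∈ D) (hunorm : ∀ i, ‖u i‖ ≤ 1)
    (happroxD : ∀ d ∈ D, Tendsto (fun i => u i * d) atTop (𝓝 d) ∧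
      Tendsto (fun i => d * u i) atTop (𝓝 d))
    {n : A} (hn : IsNormalizer D n) : n * star n ∈ D := by
  have hcomm : ∀ a ∈ D, ∀ b ∈ D, a * b = b * a := by
    intro a ha
    have : a ∈ {a : A | ∀ d ∈ D, a * d = d * a} := by rw [hmasa]; exact ha
    exact this
  have key1 : ∀ e ∈ D, ∀ d ∈ D,
      (n * e * star n) * d * (n * star n) = n * star n * ((n * e * star n) * d) := by
    intro e he d hd
    calc (n * e * star n) * d * (n * star n) = n * (e * (star n * d * n)) * star n := by
          noncomm_ring
      _ = n * ((star n * d * n) * e) * star n := by rw [hcomm _ he _ (hn d hd).2]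
      _ = n * star n * (d * (n * e * star n)) := by noncomm_ring
      _ = _ := by rw [hcomm _ hd _ (hn e he).1]
  have key2 : ∀ e ∈ D, (n * e * star n) * (n * star n) = n * star n * (n * e * star n) := by
    intro e he
    have hl := (happroxD _ (hn e he).1).2
    refine tendsto_nhds_unique (hl.mul_const (n * star n)) ?_
    simp_rw [fun i => key1 e he (u i) (humem i)]
    exact hl.const_mul _
  have key3 : ∀ e ∈ D, ∀ d ∈ D, e * (star n * (d * (n * star n) - n * star n * d)) = 0 := by
    intro e he d hd
    have h0 : (n * (star e * e) * star n) * (d * (n * star n) - n * star n * d) = 0 := by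
      have hee : star e * e ∈ D := mul_mem (star_mem he) he
      rw [mul_sub, ← mul_assoc, key1 _ hee d hd, ← mul_assoc (n * (star e * e) * star n), key2 _ hee,
        mul_assoc (n * star n), sub_self]
    rw [← CStarRing.star_mul_self_eq_zero_iff]
    generalize d * (n * star n) - n * star n * d = q at *
    have e1 : star (e * (star n * q)) * (e * (star n * q))
        = star q * ((n * (star e * e) * star n) * q) := by
      simp only [star_mul, star_star]; noncomm_ring
    rw [e1, h0, mul_zero]
  have key4 : ∀ d ∈ D, star n * (d * (n * star n) - n * star n * d) = 0 := by
    intro d hd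
    have hw : (star n * n * star n * d) * star (star n * n * star n * d) ∈ D := by
      have e1 : (star n * n * star n * d) * star (star n * n * star n * d)
          = star n * (n * (star n * (d * star d) * n) * star n) * n := by
        simp only [star_mul, star_star]; noncomm_ring
      rw [e1]
      exact (hn _ (hn _ (hn _ (mul_mem hd (star_mem hd))).2).1).2
    have tw := tendsto_of_mul_star_mem hunorm (fun d hd => (happroxD d hd).1) hw
    have tb := (happroxD _ (hn d hd).2).1.mul_const (star n)
    have e2 : star n * (d * (n * star n) - n * star n * d)
        = star n * d * n * star n - star n * n * star n * d := by noncomm_ring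
    rw [e2]
    refine tendsto_nhds_unique (tb.sub tw) ?_
    have e3 : ∀ i, u i * (star n * d * n) * star n - u i * (star n * n * star n * d) = 0 := by
      intro i
      rw [← key3 _ (humem i) d hd]; noncomm_ring
    simp_rw [e3]
    exact tendsto_const_nhds
  have hx : star (n * star n) = n * star n := by simp
  have hmem : n * star n ∈ {a : A | ∀ d ∈ D, a * d = d * a} := by
    intro d hd
    refine comm_of_mul_comm_eq_zero hx (fun d hd => ?_) hd
    rw [← sub_eq_zero, ← mul_sub, mul_assoc, key4 d hd, mul_zero]
  rw [hmasa] at hmem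
  exact hmem

end Helpers

/-- If `(A, D)` is a regular MASA inclusion of C*-algebras, then every
approximate unit for `D` is also an approximate unit for `A`. -/
theorem stmt_10 {A : Type*} [NonUnitalCStarAlgebra A]
    (D : NonUnitalStarSubalgebra ℂ A) (hDclosed : IsClosed (D : Set A))
    (hmasa : IsMasa D) (hreg : IsRegularInclusion D)
    {ι : Type*} [Preorder ι] [IsDirected ι (· ≤ ·)] [Nonempty ι] (u : ι → A)
    (humem : ∀ i, u i ∈ D)
    (hupos : ∀ i, ∃ v ∈ D, u i = star v * v)
    (hunorm : ∀ i, ‖u i‖ ≤ 1)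
    (happroxD : ∀ d ∈ D, Tendsto (fun i => u i * d) atTop (𝓝 d) ∧
      Tendsto (fun i => d * u i) atTop (𝓝 d)) :
    ∀ a : A, Tendsto (fun i => u i * a) atTop (𝓝 a) ∧
      Tendsto (fun i => a * u i) atTop (𝓝 a) := by
  have hleft : ∀ a : A, Tendsto (fun i => u i * a) atTop (𝓝 a) := by
    intro a
    have hspan : ∀ b ∈ Submodule.span ℂ {n : A | IsNormalizer D n},
        Tendsto (fun i => u i * b) atTop (𝓝 b) := by
      intro b hb
      induction hb using Submodule.span_induction with
      | mem n hn =>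
        exact tendsto_of_mul_star_mem hunorm (fun d hd => (happroxD d hd).1)
          (IsNormalizer.mul_star_mem hmasa humem hunorm happroxD hn)
      | zero => simp
      | add x y _ _ hx hy => simpa only [mul_add] using hx.add hy
      | smul c x _ hx => simpa only [mul_smul_comm] using hx.const_smul c
    rw [Metric.tendsto_nhds]
    intro ε hε
    obtain ⟨b, hb, hab⟩ := Metric.mem_closure_iff.1 (hreg a) (ε / 3) (by positivity)
    filter_upwards [Metric.tendsto_nhds.1 (hspan b hb) (ε / 3) (by positivity)] with i hi
    have h1 : dist (u i * a) (u i * b) ≤ dist a b := by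
      rw [dist_eq_norm, dist_eq_norm, ← mul_sub]
      exact (norm_mul_le _ _).trans (mul_le_of_le_one_left (norm_nonneg _) (hunorm i))
    have h2 := dist_triangle4 (u i * a) (u i * b) b a
    rw [dist_comm b a] at h2
    linarith
  refine fun a => ⟨hleft a, ?_⟩
  have hsa : ∀ i, star (u i) = u i := by
    intro i
    obtain ⟨v, -, hv⟩ := hupos i
    rw [hv, star_mul, star_star]
  simpa only [star_mul, star_star, hsa] using (hleft (star a)).star
end
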